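/- arXiv:math/0507049 — 5 statements merged into one kernel-verified Lean document; each statement's English description precedes it below -/
import Mathlib

section
/- Let p be a primitive element of F₂, let X be the exponent sum of x in p and Y the exponent sum of y in p. If X + Y is even, then the conjugacy class of p in F₂ contains no palindrome. -/
/-!
A primitive `p` is nontrivial modulo squares: freeness of a basis containing `p` gives a
homomorphism `φ : F₂ → ℤ/2` with `φ p = 1`, and `φ` is constant on conjugacy classes. The length
of a word is congruent to `X + Y` mod 2, and this parity is conjugation invariant too. So when
`X + Y` is even, a palindrome `w` conjugate to `p` has even length, that is `w = u * Ψ u` for a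
word `u`. A homomorphism to an abelian group in which every element is its own inverse ignores
the order and the signs of the letters, hence `φ (Ψ u) = φ u` and `φ w = 2 φ u = 0`,
contradicting `φ w = φ p = 1`.
-/

/-- An element of a free group is a *palindrome* if its reduced word reads the
same forwards and backwards (letters are reversed without being inverted). -/
def IsPalindrome {α : Type*} [DecidableEq α] (w : FreeGroup α) : Prop :=
  w.toWord.reverse = w.toWord

/-- A set `S` is a *basis* of the free group if it freely generates it:
the canonical map from the free group on `S` is an isomorphism fixing `S`. -/
def IsBasis {α : Type*} (S : Set (FreeGroup α)) : Prop :=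
  ∃ e : FreeGroup S ≃* FreeGroup α, ∀ s : S, e (FreeGroup.of s) = (s : FreeGroup α)

/-- An element is *primitive* if it belongs to some basis of the free group. -/
def IsPrimitive {α : Type*} (p : FreeGroup α) : Prop :=
  ∃ S : Set (FreeGroup α), IsBasis S ∧ p ∈ S

/-- The exponent sum of the generator `i` in `w`. -/
def expSum {α : Type*} [DecidableEq α] (i : α) (w : FreeGroup α) : ℤ :=
  (w.toWord.map (fun l => if l.1 = i then (if l.2 then (1 : ℤ) else -1) else 0)).sum

/-- An element is *cyclically reduced* if the first letter of its reduced word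
is not the inverse of the last letter. -/
def IsCyclicallyReduced {α : Type*} [DecidableEq α] (w : FreeGroup α) : Prop :=
  ∀ a b : α × Bool, w.toWord.head? = some a → w.toWord.getLast? = some b → a ≠ (b.1, !b.2)

/-- The free group of rank two, on generators `x = of 0` and `y = of 1`. -/
abbrev F2 := FreeGroup (Fin 2)

/-- A homomorphism to `ℤ/2` ignores the signs of the letters of a word. -/
lemma map_mk_zmod_two {α : Type*} (φ : FreeGroup α →* Multiplicative (ZMod 2))
    (L : List (α × Bool)) :
    φ (FreeGroup.mk L) = (L.map fun l => φ (FreeGroup.of l.1)).prod := by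
  have hinv : ∀ z : Multiplicative (ZMod 2), z⁻¹ = z := by decide
  induction L with
  | nil => simp [← FreeGroup.one_eq_mk]
  | cons a L ih =>
    obtain ⟨i, b⟩ := a
    have hcons : FreeGroup.mk ((i, b) :: L) = FreeGroup.mk [(i, b)] * FreeGroup.mk L := by
      simp
    have hletter : φ (FreeGroup.mk [(i, b)]) = φ (FreeGroup.of i) := by
      cases b
      · have : FreeGroup.mk [(i, false)] = (FreeGroup.of i)⁻¹ := by
          simp [FreeGroup.of, FreeGroup.inv_mk, FreeGroup.invRev]
        rw [this, map_inv, hinv]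
      · rfl
    rw [hcons, map_mul, ih, hletter, List.map_cons, List.prod_cons]

lemma even_palindrome_split {β : Type*} (L : List β) (hL : L.reverse = L)
    (he : Even L.length) : ∃ A : List β, L = A ++ A.reverse := by
  obtain ⟨n, hn⟩ := he
  refine ⟨L.take n, ?_⟩
  have hdrop : (L.take n).reverse = L.drop n := by
    rw [List.reverse_take, hL]
    congr 1
    omega
  rw [hdrop, List.take_append_drop]

lemma expSum_add_expSum (w : F2) :
    ((expSum 0 w + expSum 1 w : ℤ) : ZMod 2) = (w.toWord.length : ZMod 2) := by
  unfold expSum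
  induction w.toWord with
  | nil => simp
  | cons a L ih =>
    obtain ⟨i, b⟩ := a
    have hneg : (-1 : ZMod 2) = 1 := by decide
    push_cast at ih ⊢
    simp only [List.map_cons, List.sum_cons, List.length_cons, Nat.cast_add]
    rw [← ih]
    fin_cases i <;> cases b <;> simp [hneg] <;> ring

/-- The homomorphism to `ℤ/2` sending each generator to `1` computes the parity of the length. -/
lemma lift_one_eq_length {α : Type*} [DecidableEq α] (w : FreeGroup α) :
    FreeGroup.lift (fun _ : α => Multiplicative.ofAdd (1 : ZMod 2)) w
      = Multiplicative.ofAdd (w.toWord.length : ZMod 2) := by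
  conv_lhs => rw [← FreeGroup.mk_toWord (x := w)]
  rw [map_mk_zmod_two]
  simp [← ofAdd_nsmul]

/-- If a primitive element of `F₂` has even total exponent sum, then its
conjugacy class contains no palindrome. -/
theorem primitive_even_no_palindrome (p : F2) (hp : IsPrimitive p)
    (X Y : ℤ) (hX : X = expSum 0 p) (hY : Y = expSum 1 p) (h : Even (X + Y)) :
    ¬ ∃ w : F2, IsConj p w ∧ IsPalindrome w := by
  rintro ⟨w, hconj, hpal⟩
  obtain ⟨S, ⟨e, he⟩, hpS⟩ := hp
  have hlen : Even w.toWord.length := by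
    have h1 := isConj_iff_eq.mp ((FreeGroup.lift
      (fun _ : Fin 2 => Multiplicative.ofAdd (1 : ZMod 2))).map_isConj hconj)
    rw [lift_one_eq_length, lift_one_eq_length] at h1
    have h2 := Multiplicative.ofAdd.injective h1
    rw [← expSum_add_expSum, ← hX, ← hY, (ZMod.intCast_eq_zero_iff_even).mpr h] at h2
    exact (ZMod.natCast_eq_zero_iff_even).mp h2.symm
  let φ : F2 →* Multiplicative (ZMod 2) :=
    (FreeGroup.lift fun _ : S => Multiplicative.ofAdd (1 : ZMod 2)).comp e.symm.toMonoidHom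
  have hφp : φ p = Multiplicative.ofAdd 1 := by
    have : e.symm p = FreeGroup.of ⟨p, hpS⟩ := by
      rw [MulEquiv.symm_apply_eq, he]
    simp [φ, this]
  have hφw : φ w = 1 := by
    obtain ⟨A, hA⟩ := even_palindrome_split _ hpal hlen
    have hsq : ∀ z : Multiplicative (ZMod 2), z * z = 1 := by decide
    rw [← FreeGroup.mk_toWord (x := w), hA, map_mk_zmod_two, List.map_append, List.prod_append,
      List.map_reverse, List.prod_reverse, hsq]
  have heq := isConj_iff_eq.mp (φ.map_isConj hconj)
  rw [hφp, hφw] at heq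
  exact absurd heq (by decide)
end

section
/- Let n ≥ 2 be a natural number and let w ∈ Fₙ be a cyclically reduced element that is not a palindrome. Then w is a product of two palindromes in Fₙ if and only if the reduced word of w is the concatenation without cancellation p·q of two palindromes p, q ∈ Fₙ. -/
section

variable {α : Type*}

theorem isCyclicallyReduced_cons_iff_concat {y : α × Bool} {T : List (α × Bool)} :
    FreeGroup.IsCyclicallyReduced (y :: T) ↔ FreeGroup.IsCyclicallyReduced (T ++ [y]) := by
  by_cases hT : T = []
  · simp [hT]
  · have h1 : (y :: T).getLast? = T.getLast? := by
      rw [List.getLast?_cons, List.getLast?_eq_some_getLast hT]; rfl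
    have h2 : (T ++ [y]).head? = T.head? := List.head?_append_of_ne_nil _ hT
    simp only [FreeGroup.isCyclicallyReduced_iff, FreeGroup.IsReduced, h1, h2, List.isChain_append,
      List.isChain_cons, List.head?_cons, List.getLast?_concat, Option.mem_def, Option.some.injEq,
      forall_eq']
    tauto

variable [DecidableEq α]

/-- The definition by first and last letters agrees with Mathlib's notion, since the word of an
element is reduced. -/
theorem isCyclicallyReduced_toWord {w : FreeGroup α} (h : IsCyclicallyReduced w) :
    FreeGroup.IsCyclicallyReduced w.toWord := by
  refine ⟨FreeGroup.isReduced_toWord, fun b hb a ha hab => ?_⟩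
  have := h a b ha hb
  rcases a with ⟨a, s⟩
  rcases b with ⟨b, t⟩
  cases s <;> cases t <;> simp_all

theorem reduceCyclically_eq_self {L : List (α × Bool)} (h : FreeGroup.IsCyclicallyReduced L) :
    FreeGroup.reduceCyclically L = L := by
  induction L using List.bidirectionalRec with
  | nil => simp
  | singleton a => simp
  | cons_append a L b =>
    rw [FreeGroup.reduceCyclically.cons_append, if_neg]
    · simp
    · rintro ⟨h1, h2⟩
      have := (FreeGroup.isCyclicallyReduced_cons_append_iff (L := L)).1 (by simpa using h)
      have := this.2 h1
      simp_all

theorem reduce_cancel (A B : List (α × Bool)) (a : α) (s : Bool) :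
    FreeGroup.reduce (A ++ (a, s) :: (a, !s) :: B) = FreeGroup.reduce (A ++ B) :=
  FreeGroup.reduce.Step.eq FreeGroup.Red.Step.not

/-- Conjugating by one letter rotates the cyclic reduction. The cases are whether the conjugating
letter cancels at the left end and whether its inverse cancels at the right end. -/
theorem isRotated_conj_letter (a : α) (s : Bool) {V : List (α × Bool)}
    (hV : FreeGroup.IsReduced V) :
    FreeGroup.reduceCyclically (FreeGroup.reduce ((a, s) :: V ++ [(a, !s)])) ~r
      FreeGroup.reduceCyclically V := by
  by_cases h0 : V = []
  · subst h0
    have := reduce_cancel [] [] a s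
    simp only [List.nil_append] at this
    simp only [List.cons_append, List.nil_append, this]
    simp
  by_cases h1 : V.head? = some (a, !s)
  · obtain ⟨T, rfl⟩ := List.head?_eq_some_iff.1 h1
    have e1 : FreeGroup.reduce ((a, s) :: ((a, !s) :: T) ++ [(a, !s)]) =
        FreeGroup.reduce (T ++ [(a, !s)]) := reduce_cancel [] (T ++ [(a, !s)]) a s
    rw [e1]
    by_cases h2 : T.getLast? = some (a, s)
    · obtain ⟨U, rfl⟩ := List.getLast?_eq_some_iff.1 h2
      have e2 : FreeGroup.reduce (U ++ [(a, s)] ++ [(a, !s)]) = FreeGroup.reduce U := by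
        simpa using reduce_cancel U [] a s
      have hU : FreeGroup.IsReduced U := hV.infix ⟨[(a, !s)], [(a, s)], by simp⟩
      rw [e2, hU.reduce_eq, FreeGroup.reduceCyclically.cons_append, if_pos (by simp)]
    · have hc : FreeGroup.IsCyclicallyReduced ((a, !s) :: T) := by
        refine ⟨hV, ?_⟩
        clear e1
        rcases T.eq_nil_or_concat with rfl | ⟨T', ⟨b, t⟩, rfl⟩
        · simp
        · rw [List.concat_eq_append, ← List.cons_append, List.getLast?_concat]
          simp at h2 ⊢
          cases s <;> cases t <;> grind
      have hc' := isCyclicallyReduced_cons_iff_concat.1 hc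
      rw [hc'.isReduced.reduce_eq, reduceCyclically_eq_self hc, reduceCyclically_eq_self hc']
      exact (List.isRotated_append (l := T) (l' := [(a, !s)]))
  · by_cases h2 : V.getLast? = some (a, s)
    · obtain ⟨T, rfl⟩ := List.getLast?_eq_some_iff.1 h2
      have e1 : FreeGroup.reduce ((a, s) :: (T ++ [(a, s)]) ++ [(a, !s)]) =
          FreeGroup.reduce ((a, s) :: T) := by
        simpa using reduce_cancel ((a, s) :: T) [] a s
      have hc : FreeGroup.IsCyclicallyReduced (T ++ [(a, s)]) := by
        refine ⟨hV, ?_⟩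
        clear e1
        cases T with
        | nil => simp
        | cons c T' =>
          obtain ⟨b, t⟩ := c
          rw [List.getLast?_concat]
          simp at h1 ⊢
          cases s <;> cases t <;> grind
      have hc' := isCyclicallyReduced_cons_iff_concat.2 hc
      rw [e1, hc'.isReduced.reduce_eq, reduceCyclically_eq_self hc, reduceCyclically_eq_self hc']
      exact (List.isRotated_append (l := [(a, s)]) (l' := T))
    · have hr : FreeGroup.IsReduced ((a, s) :: V ++ [(a, !s)]) := by
        refine FreeGroup.IsReduced.append_overlap (L₁ := [(a, s)]) ?_ ?_ h0
        · cases V with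
          | nil => simp at h0
          | cons c V =>
            obtain ⟨b, t⟩ := c
            simp at h1
            refine List.isChain_cons_cons.2 ⟨?_, hV⟩
            cases s <;> cases t <;> grind
        · rcases V.eq_nil_or_concat with rfl | ⟨V', ⟨b, t⟩, rfl⟩
          · simp at h0
          · simp at h2
            refine List.IsChain.append hV (by simp) ?_
            simp
            cases s <;> cases t <;> grind
      rw [hr.reduce_eq, List.cons_append, FreeGroup.reduceCyclically.cons_append,
        if_pos (by simp)]

/-- Conjugate elements have the same cyclic reduction up to rotation. -/
theorem isRotated_reduceCyclically_conj (g w : FreeGroup α) :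
    FreeGroup.reduceCyclically (g * w * g⁻¹).toWord ~r FreeGroup.reduceCyclically w.toWord := by
  have letter (a : α) (w : FreeGroup α) :
      FreeGroup.reduceCyclically (FreeGroup.of a * w * (FreeGroup.of a)⁻¹).toWord ~r
        FreeGroup.reduceCyclically w.toWord := by
    have := isRotated_conj_letter a true (V := w.toWord) FreeGroup.isReduced_toWord
    have e : (FreeGroup.of a * w * (FreeGroup.of a)⁻¹).toWord =
        FreeGroup.reduce ((a, true) :: w.toWord ++ [(a, !true)]) := by
      rw [← FreeGroup.toWord_mk]
      congr 1
      conv_lhs => rw [← FreeGroup.mk_toWord (x := w)]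
      rfl
    rwa [e]
  induction g using FreeGroup.induction_on generalizing w with
  | C1 => simpa using List.IsRotated.refl _
  | of a => exact letter a w
  | inv_of a _ =>
    have := letter a ((FreeGroup.of a)⁻¹ * w * FreeGroup.of a)
    simp only [mul_assoc, mul_inv_cancel_left, mul_inv_cancel, mul_one] at this
    simpa [mul_assoc] using this.symm
  | mul x y hx hy =>
    have := (hx (y * w * y⁻¹)).trans (hy w)
    simpa [mul_assoc] using this

/-- The reversal `Ψ`, as a homomorphism to the opposite group fixing the generators. -/
def reversal : FreeGroup α →* (FreeGroup α)ᵐᵒᵖ :=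
  FreeGroup.lift fun a => MulOpposite.op (FreeGroup.of a)

omit [DecidableEq α] in
theorem reversal_mk (L : List (α × Bool)) :
    reversal (FreeGroup.mk L) = MulOpposite.op (FreeGroup.mk L.reverse) := by
  induction L with
  | nil => rfl
  | cons c L ih =>
    have e : FreeGroup.mk (c :: L) = FreeGroup.mk [c] * FreeGroup.mk L := rfl
    rw [e, map_mul, ih, List.reverse_cons, ← FreeGroup.mul_mk, MulOpposite.op_mul]
    congr 1
    obtain ⟨a, s⟩ := c
    cases s <;> simp [reversal, FreeGroup.of, ← MulOpposite.op_inv, FreeGroup.inv_mk,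
      FreeGroup.invRev]

theorem reversal_of_isPalindrome {p : FreeGroup α} (hp : IsPalindrome p) :
    reversal p = MulOpposite.op p := by
  conv_lhs => rw [← FreeGroup.mk_toWord (x := p), reversal_mk, hp, FreeGroup.mk_toWord]

omit [DecidableEq α] in
theorem isCyclicallyReduced_reverse {L : List (α × Bool)}
    (h : FreeGroup.IsCyclicallyReduced L) : FreeGroup.IsCyclicallyReduced L.reverse := by
  refine ⟨?_, fun a ha b hb hab => ?_⟩
  · refine List.isChain_reverse.2 (List.IsChain.imp ?_ h.isReduced)
    intro a b hab e
    exact (hab e.symm).symm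
  · simp only [List.getLast?_reverse, List.head?_reverse] at ha hb
    exact (h.2 b hb a ha hab.symm).symm

/-- A list that is a rotation of its reversal is a concatenation of two palindromes. -/
theorem exists_palindromes_of_isRotated_reverse {β : Type*} {L : List β} (h : L ~r L.reverse) :
    ∃ u v : List β, L = u ++ v ∧ u.reverse = u ∧ v.reverse = v := by
  obtain ⟨n, hn⟩ := h
  rw [List.rotate_eq_drop_append_take_mod] at hn
  set k := n % L.length
  refine ⟨L.take k, L.drop k, (List.take_append_drop k L).symm, ?_⟩
  have e : (L.drop k).reverse ++ (L.take k).reverse = L.drop k ++ L.take k := by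
    rw [← List.reverse_append, List.take_append_drop, hn]
  have := List.append_inj e (by simp)
  exact ⟨this.2, this.1⟩

end

/-- A non-palindromic cyclically reduced element of `Fₙ` (`n ≥ 2`) is a product of
two palindromes if and only if its reduced word is the concatenation without
cancellation of (the reduced words of) two palindromes. -/
theorem cyclicallyReduced_prod_two_palindromes_iff (n : ℕ) (hn : 2 ≤ n)
    (w : FreeGroup (Fin n)) (hcyc : IsCyclicallyReduced w) (hnp : ¬ IsPalindrome w) :
    (∃ p q : FreeGroup (Fin n), IsPalindrome p ∧ IsPalindrome q ∧ w = p * q) ↔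
    (∃ p q : FreeGroup (Fin n), IsPalindrome p ∧ IsPalindrome q ∧
      w.toWord = p.toWord ++ q.toWord) := by
  constructor
  · rintro ⟨p, q, hp, hq, hw⟩
    have hc := isCyclicallyReduced_toWord hcyc
    have hc' := isCyclicallyReduced_reverse hc
    have hrev : FreeGroup.mk w.toWord.reverse = q * p := by
      apply MulOpposite.op_injective
      rw [← reversal_mk, FreeGroup.mk_toWord, hw, map_mul, reversal_of_isPalindrome hp,
        reversal_of_isPalindrome hq, MulOpposite.op_mul]
    have hconj : p * FreeGroup.mk w.toWord.reverse * p⁻¹ = w := by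
      rw [hrev, hw]; group
    have hrot := isRotated_reduceCyclically_conj p (FreeGroup.mk w.toWord.reverse)
    rw [hconj, FreeGroup.toWord_mk, hc'.isReduced.reduce_eq, reduceCyclically_eq_self hc,
      reduceCyclically_eq_self hc'] at hrot
    obtain ⟨u, v, huv, hu, hv⟩ := exists_palindromes_of_isRotated_reverse hrot
    have hred : FreeGroup.IsReduced (u ++ v) := huv ▸ FreeGroup.isReduced_toWord
    have hu' : (FreeGroup.mk u).toWord = u :=
      (hred.infix (List.prefix_append u v).isInfix).reduce_eq
    have hv' : (FreeGroup.mk v).toWord = v :=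
      (hred.infix (List.suffix_append u v).isInfix).reduce_eq
    refine ⟨FreeGroup.mk u, FreeGroup.mk v, ?_, ?_, ?_⟩
    · rw [IsPalindrome, hu', hu]
    · rw [IsPalindrome, hv', hv]
    · rw [hu', hv', huv]
  · rintro ⟨p, q, hp, hq, h⟩
    refine ⟨p, q, hp, hq, ?_⟩
    rw [← FreeGroup.mk_toWord (x := w), h, ← FreeGroup.mul_mk, FreeGroup.mk_toWord,
      FreeGroup.mk_toWord]
end

section
/- Let p ∈ Fₙ be a palindrome and w ∈ Fₙ a word. If the concatenation p·w is reduced and is a palindrome, and the word length of p is strictly less than that of w, then the reduced word of w is the concatenation without cancellation q·p for some palindrome q. -/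
/-- If `p` is a palindrome, `p·w (w.c.)` is a reduced palindrome and `|p| < |w|`,
then `w ≡ q p (w.c.)` for some palindrome `q`. -/
theorem palindrome_left_lt (n : ℕ) (p w : FreeGroup (Fin n)) (hp : IsPalindrome p)
    (hred : (p * w).toWord = p.toWord ++ w.toWord) (hpal : IsPalindrome (p * w))
    (hlen : p.toWord.length < w.toWord.length) :
    ∃ q : FreeGroup (Fin n), IsPalindrome q ∧ w.toWord = q.toWord ++ p.toWord := by
  unfold IsPalindrome at hp hpal
  rw [hred, List.reverse_append, hp] at hpal
  have hsuf : p.toWord <:+ w.toWord :=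
    List.suffix_of_suffix_length_le (hpal ▸ List.suffix_append _ _) (List.suffix_append _ _) hlen.le
  obtain ⟨t, ht⟩ := hsuf
  have hpt : t.reverse = t := by
    rw [← ht, List.reverse_append, hp, List.append_assoc] at hpal
    exact List.append_cancel_right (List.append_cancel_left hpal)
  have hq : (FreeGroup.mk t).toWord = t := by
    rw [FreeGroup.toWord_mk]
    exact FreeGroup.IsReduced.reduce_eq
      ((FreeGroup.isReduced_toWord (x := w)).infix (ht ▸ (List.prefix_append _ _).isInfix))
  exact ⟨FreeGroup.mk t, by rw [IsPalindrome, hq, hpt], by rw [hq, ht]⟩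
end

section
/- Let p ∈ Fₙ be a palindrome and w ∈ Fₙ a word. If the concatenation w·p is reduced and is a palindrome, and the word length of p is strictly less than that of w, then the reduced word of w is the concatenation without cancellation p·q for some palindrome q. -/
/-- If `p` is a palindrome, `w·p (w.c.)` is a reduced palindrome and `|p| < |w|`,
then `w ≡ p q (w.c.)` for some palindrome `q`. -/
theorem palindrome_right_lt (n : ℕ) (p w : FreeGroup (Fin n)) (hp : IsPalindrome p)
    (hred : (w * p).toWord = w.toWord ++ p.toWord) (hpal : IsPalindrome (w * p))
    (hlen : p.toWord.length < w.toWord.length) :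
    ∃ q : FreeGroup (Fin n), IsPalindrome q ∧ w.toWord = p.toWord ++ q.toWord := by
  unfold IsPalindrome at hp hpal
  rw [hred, List.reverse_append, hp] at hpal
  -- Now `p ++ w.reverse = w ++ p`, so the shorter word `p` is a prefix of `w`.
  obtain ⟨t, ht⟩ : p.toWord <+: w.toWord :=
    List.prefix_of_prefix_length_le ⟨_, hpal⟩ ⟨_, rfl⟩ hlen.le
  -- With `w = p ++ t`, cancelling `p` on both sides of the equation leaves `t.reverse = t`.
  have htr : t.reverse = t := by
    rw [← ht, List.reverse_append, hp, ← List.append_assoc] at hpal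
    exact List.append_cancel_left (List.append_cancel_right hpal)
  -- `t` is a suffix of a reduced word, so it is the reduced word of the element it represents.
  have hq : (FreeGroup.mk t).toWord = t := by
    rw [FreeGroup.toWord_mk]
    exact (FreeGroup.isReduced_toWord.infix (List.IsSuffix.isInfix ⟨_, ht⟩)).reduce_eq
  exact ⟨FreeGroup.mk t, by rw [IsPalindrome, hq, htr], by rw [hq, ht]⟩
end

section
/- If w ∈ F₂ is a product of at most two palindromes, then for every a ∈ F₂ the conjugate a·w·a⁻¹ is also a product of at most two palindromes. -/
/-- The reversal map `Ψ`, encoded as a homomorphism into the opposite group: it fixes each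
generator and reverses products. -/
def revHom : F2 →* F2ᵐᵒᵖ := FreeGroup.lift fun i => MulOpposite.op (FreeGroup.of i)

/-- The reversal map `Ψ` as a self-map of the free group. -/
def rev (w : F2) : F2 := (revHom w).unop

lemma rev_mul (u v : F2) : rev (u * v) = rev v * rev u := by simp [rev]

lemma rev_inv (u : F2) : rev u⁻¹ = (rev u)⁻¹ := by simp [rev]

/-- `Ψ` acts on words, reduced or not, by reversing the list of letters. -/
lemma rev_mk (L : List (Fin 2 × Bool)) : rev (FreeGroup.mk L) = FreeGroup.mk L.reverse := by
  induction L with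
  | nil => simp [rev, ← FreeGroup.one_eq_mk]
  | cons l L ih =>
    obtain ⟨i, b⟩ := l
    have hl : rev (FreeGroup.mk [(i, b)]) = FreeGroup.mk [(i, b)] := by
      cases b <;> simp [rev, revHom, FreeGroup.of, FreeGroup.inv_mk, FreeGroup.invRev]
    rw [← List.singleton_append, ← FreeGroup.mul_mk, rev_mul, ih, hl, FreeGroup.mul_mk,
      List.reverse_append, List.reverse_singleton]

lemma rev_rev (u : F2) : rev (rev u) = u := by
  rw [← FreeGroup.mk_toWord (x := u), rev_mk, rev_mk, List.reverse_reverse]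

/-- Palindromes are the fixed points of `Ψ`, because the reversal of a reduced word is reduced. -/
lemma isPalindrome_iff (w : F2) : IsPalindrome w ↔ rev w = w := by
  have hrev : rev w = FreeGroup.mk w.toWord.reverse := by
    rw [← rev_mk, FreeGroup.mk_toWord]
  have hred : FreeGroup.IsReduced w.toWord.reverse := by
    have h : FreeGroup.IsReduced w.toWord := FreeGroup.isReduced_toWord
    unfold FreeGroup.IsReduced at h ⊢
    rw [List.isChain_reverse]
    exact h.imp fun x y hxy e => (hxy e.symm).symm
  rw [IsPalindrome, hrev, ← FreeGroup.toWord_inj, FreeGroup.toWord_mk, hred.reduce_eq]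

/-- If `w ∈ F₂` is a product of at most two palindromes, then so is each of its
conjugates (the identity is a palindrome, so "a product of at most two palindromes"
is expressed as "a product of two palindromes"). -/
theorem conj_prod_two_palindromes (w : F2)
    (hw : ∃ p q : F2, IsPalindrome p ∧ IsPalindrome q ∧ w = p * q) (a : F2) :
    ∃ p q : F2, IsPalindrome p ∧ IsPalindrome q ∧ a * w * a⁻¹ = p * q := by
  obtain ⟨p, q, hp, hq, rfl⟩ := hw
  rw [isPalindrome_iff] at hp hq
  refine ⟨a * p * rev a, (rev a)⁻¹ * q * a⁻¹, ?_, ?_, by group⟩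
  · rw [isPalindrome_iff]
    simp only [rev_mul, rev_rev, hp, mul_assoc]
  · rw [isPalindrome_iff]
    simp only [rev_mul, rev_inv, rev_rev, hq, mul_assoc]
end
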